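/- arXiv:2203.06738 — 3 statements merged into one kernel-verified Lean document; each statement's English description precedes it below -/
import Mathlib

section
/- Let X be a complex Banach space and T a bounded linear operator on X. Then the g_z-invertible spectrum of T equals the set of accumulation points of the set of accumulation points of the spectrum of T; that is, for every λ ∈ ℂ, the operator T − λI is g_z-invertible if and only if λ is not an accumulation point of acc σ(T). -/
open Filter Set Function

variable {X : Type*} [NormedAddCommGroup X] [NormedSpace ℂ X] [CompleteSpace X]

/-- Accumulation points of a subset of `ℂ`. -/
def accSet (A : Set ℂ) : Set ℂ := {z : ℂ | AccPt z (Filter.principal A)}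

/-- `(M, N) ∈ Red(T)`: a pair of closed `T`-invariant subspaces with `X = M ⊕ N`. -/
def Red (T : X →L[ℂ] X) (M N : Submodule ℂ X) : Prop :=
  IsClosed (M : Set X) ∧ IsClosed (N : Set X) ∧ (∀ x ∈ M, T x ∈ M) ∧ (∀ x ∈ N, T x ∈ N) ∧
    IsCompl M N

open Classical in
/-- Restriction of `T` to a `T`-invariant subspace `M` (junk value `0` if `M` is not invariant). -/
noncomputable def restrictCLM (T : X →L[ℂ] X) (M : Submodule ℂ X) : M →L[ℂ] M :=
  if h : ∀ x ∈ M, T x ∈ M then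
    { toLinearMap := (T : X →ₗ[ℂ] X).restrict h
      cont := by exact (T.continuous.comp continuous_subtype_val).subtype_mk _ }
  else 0

/-- An operator is zeroloid if the accumulation points of its spectrum are contained in `{0}`. -/
def Zeroloid {Y : Type*} [NormedAddCommGroup Y] [NormedSpace ℂ Y] (S : Y →L[ℂ] Y) : Prop :=
  accSet (spectrum ℂ S) ⊆ {0}

/-- `T` is `g_z`-invertible. -/
def GzInvertible (T : X →L[ℂ] X) : Prop :=
  ∃ M N : Submodule ℂ X, Red T M N ∧ Function.Bijective (restrictCLM T M) ∧
    Zeroloid (restrictCLM T N)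

/-!
If `λ ∉ acc (acc σ(T))`, then near `λ` the set `acc σ(T)` is contained in `{λ}`, so some small
circle around `λ` lies in the resolvent set of `T`. The Riesz projection of that circle splits `X`
into two invariant subspaces carrying the parts of `σ(T)` outside and inside the circle: `T - λ` is
invertible on the first, and the spectrum of `T` on the second accumulates at most at `λ`.
Conversely, a decomposition `X = M ⊕ N` gives `σ(S) = σ(S_M) ∪ σ(S_N)` for `S = T - λ`, where
`σ(S_M)` is closed and misses `0` while `acc σ(S_N) ⊆ {0}`; so `acc σ(S) ⊆ σ(S_M) ∪ {0}` does not
accumulate at `0`.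
-/

open Metric Topology

section Circle

variable {E F : Type*} [NormedAddCommGroup E] [NormedSpace ℂ E] {c w : ℂ} {R : ℝ}

lemma circleIntegral_eq_zero_of_eqOn_inter_ball (hR : 0 ≤ R) {f g : ℂ → E} {U : Set ℂ}
    (hU : IsOpen U) (hsphere : sphere c R ⊆ U) (hf : ContinuousOn f U)
    (hg : DifferentiableOn ℂ g (ball c R)) (hfg : EqOn f g (U ∩ ball c R)) :
    (∮ z in C(c, R), f z) = 0 := by
  classical
  set h : ℂ → E := (ball c R).piecewise g f
  have h_eq_f : EqOn h f U := fun z hz => by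
    by_cases hzR : z ∈ ball c R
    · exact (piecewise_eq_of_mem _ _ _ hzR).trans (hfg ⟨hz, hzR⟩).symm
    · exact piecewise_eq_of_notMem _ _ _ hzR
  have hdiff : DifferentiableOn ℂ h (ball c R) := hg.congr (piecewise_eqOn _ _ _)
  have hcont : ContinuousOn h (closedBall c R) := by
    intro z hz
    rw [← ball_union_sphere] at hz
    rcases hz with hball | hsph
    · exact (hdiff.continuousOn.continuousAt (isOpen_ball.mem_nhds hball)).continuousWithinAt
    · exact ((hf.congr h_eq_f).continuousAt (hU.mem_nhds (hsphere hsph))).continuousWithinAt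
  calc (∮ z in C(c, R), f z) = ∮ z in C(c, R), h z :=
        circleIntegral.integral_congr hR fun z hz => (h_eq_f (hsphere hz)).symm
    _ = 0 := (DiffContOnCl.mk_ball hdiff hcont).circleIntegral_eq_zero hR

lemma circleIntegral_clm_comp_comm [CompleteSpace E] [NormedAddCommGroup F] [NormedSpace ℂ F]
    [CompleteSpace F] (L : E →L[ℂ] F) {f : ℂ → E} (hf : CircleIntegrable f c R) :
    (∮ z in C(c, R), L (f z)) = L (∮ z in C(c, R), f z) := by
  simpa only [circleIntegral, map_smul] using L.intervalIntegral_comp_comm hf.out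

lemma circleIntegral_sub_inv_of_notMem_closedBall (hR : 0 ≤ R) (hw : w ∉ closedBall c R) :
    (∮ z in C(c, R), (z - w)⁻¹) = 0 := by
  have hne : ∀ z ∈ closure (ball c R), z - w ≠ 0 := fun z hz h =>
    hw (sub_eq_zero.1 h ▸ closure_ball_subset_closedBall hz)
  exact ((differentiable_id.sub_const w).diffContOnCl.inv hne).circleIntegral_eq_zero hR

end Circle

section Resolvent

lemma commute_resolvent {𝕜 A : Type*} [CommRing 𝕜] [Ring A] [Algebra 𝕜 A] {a S : A}
    (h : Commute a S) (z : 𝕜) : Commute a (resolvent S z) := by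
  by_cases hz : IsUnit (algebraMap 𝕜 A z - S)
  · obtain ⟨u, hu⟩ := hz
    have hau : Commute a u := hu ▸ (Algebra.commute_algebraMap_right z a).sub_right h
    rw [resolvent, ← hu, Ring.inverse_unit]
    exact hau.units_inv_right
  · rw [resolvent, Ring.inverse_non_unit _ hz]
    exact Commute.zero_right a

lemma algebraMap_sub_mul_resolvent {𝕜 A : Type*} [CommRing 𝕜] [Ring A] [Algebra 𝕜 A] {S : A}
    {z : 𝕜} (hz : z ∈ resolventSet 𝕜 S) (w : 𝕜) :
    (algebraMap 𝕜 A w - S) * resolvent S z = 1 - (z - w) • resolvent S z := by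
  have hmul : (algebraMap 𝕜 A z - S) * resolvent S z = 1 := Ring.mul_inverse_cancel _ hz
  rw [← hmul, Algebra.smul_def, map_sub, ← sub_mul]
  congr 1
  abel

variable {A : Type*} [NormedRing A] [NormedAlgebra ℂ A] [CompleteSpace A]

lemma continuousOn_resolvent (S : A) : ContinuousOn (resolvent S) (resolventSet ℂ S) :=
  fun _ hz =>
    (spectrum.hasDerivAt_resolvent_const_left hz).continuousAt.continuousWithinAt

variable {S a : A} {c w : ℂ} {R : ℝ}

lemma commute_circleIntegral (hR : 0 ≤ R) {f : ℂ → A} (hf : CircleIntegrable f c R)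
    (h : ∀ z ∈ sphere c R, Commute a (f z)) : Commute a (∮ z in C(c, R), f z) :=
  calc a * (∮ z in C(c, R), f z)
      = ∮ z in C(c, R), a * f z :=
        (circleIntegral_clm_comp_comm (ContinuousLinearMap.mul ℂ A a) hf).symm
    _ = ∮ z in C(c, R), f z * a := circleIntegral.integral_congr hR h
    _ = (∮ z in C(c, R), f z) * a :=
        circleIntegral_clm_comp_comm ((ContinuousLinearMap.mul ℂ A).flip a) hf

/-- The Riesz projection of `S` for the part of its spectrum inside the circle `C(c, R)`, namely
`(2πi)⁻¹ ∮ (z - S)⁻¹ dz`. It is meaningful when the circle lies in the resolvent set of `S`. -/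
noncomputable def rieszProjection (S : A) (c : ℂ) (R : ℝ) : A :=
  (2 * Real.pi * Complex.I : ℂ)⁻¹ • ∮ z in C(c, R), resolvent S z

/-- The Cauchy transform `w ↦ (2πi)⁻¹ ∮ (z - w)⁻¹ (z - S)⁻¹ dz` of the resolvent of `S` along the
circle `C(c, R)`. It inverts `w - S` on the range of `1 - P` for `w` inside the circle, and
inverts `S - w` on the range of `P` for `w` outside, where `P = rieszProjection S c R`. -/
noncomputable def resolventCauchyTransform (S : A) (c : ℂ) (R : ℝ) (w : ℂ) : A :=
  (2 * Real.pi * Complex.I : ℂ)⁻¹ • ∮ z in C(c, R), (z - w)⁻¹ • resolvent S z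

lemma continuousOn_sub_inv_sphere (hw : w ∉ sphere c R) :
    ContinuousOn (fun z : ℂ => (z - w)⁻¹) (sphere c R) :=
  ContinuousOn.inv₀ (by fun_prop) fun _ hz h => hw (sub_eq_zero.1 h ▸ hz)

lemma circleIntegrable_resolvent (hR : 0 ≤ R) (hS : sphere c R ⊆ resolventSet ℂ S) :
    CircleIntegrable (resolvent S) c R :=
  ((continuousOn_resolvent S).mono hS).circleIntegrable hR

lemma circleIntegrable_sub_inv_smul_resolvent (hR : 0 ≤ R)
    (hS : sphere c R ⊆ resolventSet ℂ S) (hw : w ∉ sphere c R) :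
    CircleIntegrable (fun z => (z - w)⁻¹ • resolvent S z) c R :=
  ((continuousOn_sub_inv_sphere hw).smul ((continuousOn_resolvent S).mono hS)).circleIntegrable hR

lemma commute_rieszProjection (hR : 0 ≤ R) (hS : sphere c R ⊆ resolventSet ℂ S) :
    Commute S (rieszProjection S c R) :=
  (commute_circleIntegral hR (circleIntegrable_resolvent hR hS) fun z _ =>
    commute_resolvent (Commute.refl S) z).smul_right _

lemma commute_resolventCauchyTransform (hR : 0 ≤ R) (hS : sphere c R ⊆ resolventSet ℂ S)
    (hw : w ∉ sphere c R) : Commute S (resolventCauchyTransform S c R w) :=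
  (commute_circleIntegral hR (circleIntegrable_sub_inv_smul_resolvent hR hS hw) fun z _ =>
    (commute_resolvent (Commute.refl S) z).smul_right _).smul_right _

lemma algebraMap_sub_mul_resolventCauchyTransform (hR : 0 ≤ R)
    (hS : sphere c R ⊆ resolventSet ℂ S) (hw : w ∉ sphere c R) :
    (algebraMap ℂ A w - S) * resolventCauchyTransform S c R w =
      ((2 * Real.pi * Complex.I : ℂ)⁻¹ * ∮ z in C(c, R), (z - w)⁻¹) • (1 : A) -
        rieszProjection S c R := by
  have hpointwise : ∀ z ∈ sphere c R, (algebraMap ℂ A w - S) * ((z - w)⁻¹ • resolvent S z) =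
      (z - w)⁻¹ • (1 : A) - resolvent S z := fun z hz => by
    have hzw : z - w ≠ 0 := fun h => hw (sub_eq_zero.1 h ▸ hz)
    rw [mul_smul_comm, algebraMap_sub_mul_resolvent (hS hz), smul_sub, inv_smul_smul₀ hzw]
  have hintegral : (algebraMap ℂ A w - S) * (∮ z in C(c, R), (z - w)⁻¹ • resolvent S z) =
      (∮ z in C(c, R), (z - w)⁻¹) • (1 : A) - ∮ z in C(c, R), resolvent S z :=
    calc (algebraMap ℂ A w - S) * (∮ z in C(c, R), (z - w)⁻¹ • resolvent S z)
        = ∮ z in C(c, R), (algebraMap ℂ A w - S) * ((z - w)⁻¹ • resolvent S z) :=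
          (circleIntegral_clm_comp_comm (ContinuousLinearMap.mul ℂ A (algebraMap ℂ A w - S))
            (circleIntegrable_sub_inv_smul_resolvent hR hS hw)).symm
      _ = ∮ z in C(c, R), ((z - w)⁻¹ • (1 : A) - resolvent S z) :=
          circleIntegral.integral_congr hR hpointwise
      _ = (∮ z in C(c, R), (z - w)⁻¹) • (1 : A) - ∮ z in C(c, R), resolvent S z := by
          have hconst : CircleIntegrable (fun z => (z - w)⁻¹ • (1 : A)) c R :=
            ((continuousOn_sub_inv_sphere hw).smul continuousOn_const).circleIntegrable hR
          rw [circleIntegral.integral_sub hconst (circleIntegrable_resolvent hR hS),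
            circleIntegral.integral_smul_const]
  rw [resolventCauchyTransform, mul_smul_comm, hintegral, smul_sub, smul_smul, rieszProjection]

lemma algebraMap_sub_mul_resolventCauchyTransform_of_mem_ball
    (hS : sphere c R ⊆ resolventSet ℂ S) (hw : w ∈ ball c R) :
    (algebraMap ℂ A w - S) * resolventCauchyTransform S c R w = 1 - rieszProjection S c R := by
  rw [algebraMap_sub_mul_resolventCauchyTransform (pos_of_mem_ball hw).le hS
      (sphere_disjoint_ball.notMem_of_mem_right hw),
    circleIntegral.integral_sub_inv_of_mem_ball hw, inv_mul_cancel₀ Complex.two_pi_I_ne_zero,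
    one_smul]

lemma algebraMap_sub_mul_resolventCauchyTransform_of_notMem_closedBall (hR : 0 ≤ R)
    (hS : sphere c R ⊆ resolventSet ℂ S) (hw : w ∉ closedBall c R) :
    (algebraMap ℂ A w - S) * resolventCauchyTransform S c R w = -rieszProjection S c R := by
  rw [algebraMap_sub_mul_resolventCauchyTransform hR hS (mt (sphere_subset_closedBall ·) hw),
    circleIntegral_sub_inv_of_notMem_closedBall hR hw, mul_zero, zero_smul, zero_sub]

lemma differentiableOn_resolventCauchyTransform (hR : 0 < R)
    (hS : sphere c R ⊆ resolventSet ℂ S) :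
    DifferentiableOn ℂ (resolventCauchyTransform S c R) (ball c R) := by
  lift R to NNReal using hR.le
  have hpower := hasFPowerSeriesOn_cauchy_integral
    (circleIntegrable_resolvent R.2 hS) (NNReal.coe_pos.1 hR)
  exact eball_coe (x := c) ▸ hpower.differentiableOn

-- On the disc, `(z - S)⁻¹ (1 - P)` extends holomorphically across the spectrum of `S`, by the
-- Cauchy transform of the resolvent; hence `P (1 - P) = (2πi)⁻¹ ∮ (z - S)⁻¹ (1 - P) dz` vanishes.
lemma isIdempotentElem_rieszProjection (hR : 0 < R) (hS : sphere c R ⊆ resolventSet ℂ S) :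
    IsIdempotentElem (rieszProjection S c R) := by
  set P := rieszProjection S c R with hP
  have hextend : EqOn (fun z => resolvent S z * (1 - P)) (resolventCauchyTransform S c R)
      (resolventSet ℂ S ∩ ball c R) := fun z ⟨hz, hzR⟩ => by
    have hinv : resolvent S z * (algebraMap ℂ A z - S) = 1 := Ring.inverse_mul_cancel _ hz
    simp only [hP, ← algebraMap_sub_mul_resolventCauchyTransform_of_mem_ball hS hzR, ← mul_assoc,
      hinv, one_mul]
  have hvanish : (∮ z in C(c, R), resolvent S z * (1 - P)) = 0 :=
    circleIntegral_eq_zero_of_eqOn_inter_ball hR.le (spectrum.isOpen_resolventSet S) hS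
      ((continuousOn_resolvent S).mul continuousOn_const)
      (differentiableOn_resolventCauchyTransform hR hS) hextend
  have hpull : (∮ z in C(c, R), resolvent S z) * (1 - P) =
      ∮ z in C(c, R), resolvent S z * (1 - P) :=
    (circleIntegral_clm_comp_comm ((ContinuousLinearMap.mul ℂ A).flip (1 - P))
      (circleIntegrable_resolvent hR.le hS)).symm
  have hmul : P * (1 - P) = 0 := by
    conv_lhs => enter [1]; rw [hP, rieszProjection]
    rw [smul_mul_assoc, hpull, hvanish, smul_zero]
  rw [mul_sub, mul_one, sub_eq_zero] at hmul
  exact hmul.symm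

end Resolvent

section Restriction

variable {E : Type*} [NormedAddCommGroup E] [NormedSpace ℂ E] {S T P : E →L[ℂ] E}
  {M N : Submodule ℂ E}

lemma coe_restrictCLM_apply (hM : ∀ x ∈ M, T x ∈ M) (x : M) : (restrictCLM T M x : E) = T x := by
  rw [restrictCLM, dif_pos hM]
  rfl

lemma restrictCLM_mul (hS : ∀ x ∈ M, S x ∈ M) (hT : ∀ x ∈ M, T x ∈ M) :
    restrictCLM (S * T) M = restrictCLM S M * restrictCLM T M := by
  ext x
  have hST : ∀ x ∈ M, (S * T) x ∈ M := fun x hx => hS _ (hT x hx)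
  simp [coe_restrictCLM_apply hS, coe_restrictCLM_apply hT, coe_restrictCLM_apply hST]

lemma restrictCLM_algebraMap_sub (hT : ∀ x ∈ M, T x ∈ M) (w : ℂ) :
    restrictCLM (algebraMap ℂ (E →L[ℂ] E) w - T) M =
      algebraMap ℂ (M →L[ℂ] M) w - restrictCLM T M := by
  ext x
  have hwT : ∀ x ∈ M, (algebraMap ℂ (E →L[ℂ] E) w - T) x ∈ M := fun x hx =>
    M.sub_mem (M.smul_mem w hx) (hT x hx)
  simp [coe_restrictCLM_apply hT, coe_restrictCLM_apply hwT]

lemma apply_mem_range_of_commute (h : Commute T P) : ∀ x ∈ P.range, T x ∈ P.range := by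
  rintro _ ⟨y, rfl⟩
  exact ⟨T y, congr($h.eq.symm y)⟩

lemma restrictCLM_range_of_isIdempotentElem (hP : IsIdempotentElem P) :
    restrictCLM P P.range = 1 := by
  ext ⟨_, y, rfl⟩
  rw [coe_restrictCLM_apply (apply_mem_range_of_commute (Commute.refl P))]
  exact congr($hP.eq y)

lemma notMem_spectrum_restrictCLM_range {Q : E →L[ℂ] E} {w : ℂ} (hP : IsIdempotentElem P)
    (hSQ : Commute S Q) (h : (algebraMap ℂ (E →L[ℂ] E) w - S) * Q = P) :
    w ∉ spectrum ℂ (restrictCLM S P.range) := by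
  set B := algebraMap ℂ (E →L[ℂ] E) w - S
  have hBQ : Commute B Q := (Algebra.commute_algebraMap_left w Q).sub_left hSQ
  have hSB : Commute S B := (Algebra.commute_algebraMap_right w S).sub_right (Commute.refl S)
  have hS := apply_mem_range_of_commute (h ▸ hSB.mul_right hSQ : Commute S P)
  have hB := apply_mem_range_of_commute (h ▸ (Commute.refl B).mul_right hBQ : Commute B P)
  have hQ := apply_mem_range_of_commute (h ▸ hBQ.symm.mul_right (Commute.refl Q) : Commute Q P)
  have hright : restrictCLM B P.range * restrictCLM Q P.range = 1 := by
    rw [← restrictCLM_mul hB hQ, h, restrictCLM_range_of_isIdempotentElem hP]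
  have hleft : restrictCLM Q P.range * restrictCLM B P.range = 1 := by
    rw [← restrictCLM_mul hQ hB, ← hBQ.eq, h, restrictCLM_range_of_isIdempotentElem hP]
  rw [spectrum.notMem_iff, ← restrictCLM_algebraMap_sub hS]
  exact isUnit_iff_exists.2 ⟨_, hright, hleft⟩

lemma red_range_of_isIdempotentElem (hP : IsIdempotentElem P) (hSP : Commute S P) :
    Red S (1 - P).range P.range := by
  have hPlin : IsIdempotentElem (P : E →ₗ[ℂ] E) :=
    ContinuousLinearMap.IsIdempotentElem.toLinearMap hP
  have hcompl : IsCompl (1 - P).range P.range :=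
    LinearMap.IsIdempotentElem.ker_eq_range_one_sub hPlin ▸
      (LinearMap.IsIdempotentElem.isCompl hPlin).symm
  exact ⟨ContinuousLinearMap.IsIdempotentElem.isClosed_range hP.one_sub,
    ContinuousLinearMap.IsIdempotentElem.isClosed_range hP,
    apply_mem_range_of_commute ((Commute.one_right S).sub_right hSP),
    apply_mem_range_of_commute hSP, hcompl⟩

lemma Red.algebraMap_sub (h : Red T M N) (w : ℂ) :
    Red (algebraMap ℂ (E →L[ℂ] E) w - T) M N := by
  obtain ⟨hM, hN, hTM, hTN, hMN⟩ := h
  exact ⟨hM, hN, fun x hx => M.sub_mem (M.smul_mem w hx) (hTM x hx),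
    fun x hx => N.sub_mem (N.smul_mem w hx) (hTN x hx), hMN⟩

lemma Red.bijective_iff (h : Red T M N) :
    Bijective T ↔ Bijective (restrictCLM T M) ∧ Bijective (restrictCLM T N) := by
  obtain ⟨-, -, hTM, hTN, hMN⟩ := h
  set e := M.prodEquivOfIsCompl N hMN
  have hconj : T ∘ e = e ∘ Prod.map (restrictCLM T M) (restrictCLM T N) := by
    ext ⟨x, y⟩
    simp [e, coe_restrictCLM_apply hTM, coe_restrictCLM_apply hTN]
  rw [← Prod.map_bijective, ← e.bijective.of_comp_iff T, hconj, e.bijective.of_comp_iff']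

end Restriction

section Spectrum

lemma mem_spectrum_iff_not_bijective {T : X →L[ℂ] X} {w : ℂ} :
    w ∈ spectrum ℂ T ↔ ¬ Bijective (algebraMap ℂ (X →L[ℂ] X) w - T) := by
  rw [spectrum.mem_iff, ContinuousLinearMap.isUnit_iff_bijective]

variable {S : X →L[ℂ] X} {M N : Submodule ℂ X}

lemma Red.spectrum_eq_union (h : Red S M N) :
    spectrum ℂ S = spectrum ℂ (restrictCLM S M) ∪ spectrum ℂ (restrictCLM S N) := by
  have : CompleteSpace M := h.1.completeSpace_coe
  have : CompleteSpace N := h.2.1.completeSpace_coe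
  ext w
  rw [mem_union, mem_spectrum_iff_not_bijective, mem_spectrum_iff_not_bijective,
    mem_spectrum_iff_not_bijective, (h.algebraMap_sub w).bijective_iff, not_and_or,
    restrictCLM_algebraMap_sub h.2.2.1, restrictCLM_algebraMap_sub h.2.2.2.1]

theorem exists_red_spectrum_eq {c : ℂ} {R : ℝ} (hR : 0 < R)
    (hS : sphere c R ⊆ resolventSet ℂ S) :
    ∃ M N : Submodule ℂ X, Red S M N ∧
      spectrum ℂ (restrictCLM S M) = spectrum ℂ S \ ball c R ∧
      spectrum ℂ (restrictCLM S N) = spectrum ℂ S ∩ ball c R := by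
  set P := rieszProjection S c R
  have hP : IsIdempotentElem P := isIdempotentElem_rieszProjection hR hS
  have hred : Red S (1 - P).range P.range :=
    red_range_of_isIdempotentElem hP (commute_rieszProjection hR.le hS)
  have hM : ∀ w ∈ spectrum ℂ (restrictCLM S (1 - P).range), w ∉ ball c R := fun w hw hwR =>
    notMem_spectrum_restrictCLM_range hP.one_sub
      (commute_resolventCauchyTransform hR.le hS (sphere_disjoint_ball.notMem_of_mem_right hwR))
      (algebraMap_sub_mul_resolventCauchyTransform_of_mem_ball hS hwR) hw
  have hNclosed : ∀ w ∈ spectrum ℂ (restrictCLM S P.range), w ∈ closedBall c R := fun w hw => by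
    by_contra hwR
    refine notMem_spectrum_restrictCLM_range hP (commute_resolventCauchyTransform hR.le hS
      (mt (sphere_subset_closedBall ·) hwR)).neg_right ?_ hw
    rw [mul_neg, algebraMap_sub_mul_resolventCauchyTransform_of_notMem_closedBall hR.le hS hwR,
      neg_neg]
  have hunion := hred.spectrum_eq_union
  have hN : ∀ w ∈ spectrum ℂ (restrictCLM S P.range), w ∈ ball c R := fun w hw => by
    have hball_or_sphere := hNclosed w hw
    rw [← ball_union_sphere] at hball_or_sphere
    exact hball_or_sphere.resolve_right fun hsph =>
      spectrum.notMem_iff.2 (hS hsph) (hunion ▸ Or.inr hw)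
  refine ⟨_, _, hred, ?_, ?_⟩ <;> ext w <;> rw [hunion] <;> grind

end Spectrum

section DerivedSet

lemma derivedSet_preimage_of_isOpenEmbedding {Y Z : Type*} [TopologicalSpace Y]
    [TopologicalSpace Z] {f : Y → Z} (hf : IsOpenEmbedding f) (A : Set Z) :
    derivedSet (f ⁻¹' A) = f ⁻¹' derivedSet A := by
  ext y
  rw [mem_derivedSet, ← comap_principal, hf.accPt_comap_iff]
  rfl

lemma notMem_derivedSet_derivedSet_union {Y : Type*} [TopologicalSpace Y] {A B : Set Y} {x : Y}
    (hA : IsClosed A) (hx : x ∉ A) (hB : derivedSet B ⊆ {x}) :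
    x ∉ derivedSet (derivedSet (A ∪ B)) := by
  have hA' : derivedSet A ⊆ A := (isClosed_iff_derivedSet_subset A).1 hA
  have hsub : derivedSet (A ∪ B) ⊆ A ∪ {x} := by
    rw [derivedSet_union]
    exact union_subset_union hA' hB
  intro h
  have h' := derivedSet_mono _ _ hsub h
  rw [derivedSet_union] at h'
  rcases h' with h' | h'
  · exact hx (hA' h')
  · rw [mem_derivedSet, accPt_principal_iff_nhdsWithin] at h'
    simp [neBot_iff] at h'

variable {Y : Type*} [PseudoMetricSpace Y] [ProperSpace Y] {K : Set Y} {c : Y}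

lemma exists_sphere_disjoint_of_derivedSet_inter_ball_subset {ε : ℝ} (hε : 0 < ε)
    (h : derivedSet K ∩ ball c ε ⊆ {c}) : ∃ R ∈ Ioo 0 ε, Disjoint (sphere c R) K := by
  by_contra! hmeet
  set annulus : Set Y := closedBall c (ε / 2) \ ball c (ε / 3)
  have hradii : Icc (ε / 3) (ε / 2) ⊆ (dist · c) '' (K ∩ annulus) := fun r hr => by
    obtain ⟨z, hz, hzK⟩ := not_disjoint_iff.1 (hmeet r ⟨by linarith [hr.1], by linarith [hr.2]⟩)
    rw [mem_sphere] at hz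
    exact ⟨z, ⟨hzK, by simp [annulus, hz, hr.1, hr.2]⟩, hz⟩
  have hinf : (K ∩ annulus).Infinite :=
    ((Icc_infinite (by linarith)).mono hradii).of_image _
  obtain ⟨y, hy, hyacc⟩ := hinf.exists_accPt_of_subset_isCompact
    ((isCompact_closedBall c (ε / 2)).diff isOpen_ball) inter_subset_right
  have hyc : y = c := h ⟨derivedSet_mono _ _ inter_subset_left hyacc,
    closedBall_subset_ball (by linarith) hy.1⟩
  exact hy.2 (hyc ▸ mem_ball_self (by linarith))

lemma exists_sphere_disjoint_derivedSet_inter_ball_subset (h : c ∉ derivedSet (derivedSet K)) :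
    ∃ R > 0, Disjoint (sphere c R) K ∧ derivedSet (K ∩ ball c R) ⊆ {c} := by
  obtain ⟨ε, hε, hball⟩ : ∃ ε > 0, derivedSet K ∩ ball c ε ⊆ {c} := by
    rw [mem_derivedSet, accPt_iff_frequently, not_frequently, eventually_nhds_iff_ball] at h
    obtain ⟨ε, hε, h⟩ := h
    exact ⟨ε, hε, fun y ⟨hyK, hy⟩ => by_contra fun hyc => h y hy ⟨hyc, hyK⟩⟩
  obtain ⟨R, ⟨hR, hRε⟩, hdisj⟩ := exists_sphere_disjoint_of_derivedSet_inter_ball_subset hε hball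
  refine ⟨R, hR, hdisj, fun y hy => hball ⟨derivedSet_mono _ _ inter_subset_left hy, ?_⟩⟩
  have hyR : y ∈ closure (ball c R) :=
    derivedSet_subset_closure _ (derivedSet_mono _ _ inter_subset_right hy)
  exact closedBall_subset_ball hRε (closure_ball_subset_closedBall hyR)

end DerivedSet

lemma GzInvertible.zero_notMem_accSet_accSet {S : X →L[ℂ] X} (h : GzInvertible S) :
    0 ∉ accSet (accSet (spectrum ℂ S)) := by
  obtain ⟨M, N, hred, hbij, hzero⟩ := h
  have : CompleteSpace M := hred.1.completeSpace_coe
  have h0 : 0 ∉ spectrum ℂ (restrictCLM S M) :=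
    (spectrum.zero_notMem_iff ℂ).2 (ContinuousLinearMap.isUnit_iff_bijective.2 hbij)
  have hclosed := spectrum.isClosed (𝕜 := ℂ) (restrictCLM S M)
  rw [hred.spectrum_eq_union]
  exact notMem_derivedSet_derivedSet_union hclosed h0 hzero

lemma gzInvertible_of_zero_notMem_accSet_accSet {S : X →L[ℂ] X}
    (h : 0 ∉ accSet (accSet (spectrum ℂ S))) : GzInvertible S := by
  obtain ⟨R, hR, hdisj, hacc⟩ := exists_sphere_disjoint_derivedSet_inter_ball_subset h
  obtain ⟨M, N, hred, hM, hN⟩ := exists_red_spectrum_eq hR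
    fun z hz => spectrum.notMem_iff.1 (hdisj.notMem_of_mem_left hz)
  have : CompleteSpace M := hred.1.completeSpace_coe
  refine ⟨M, N, hred, ?_, ?_⟩
  · rw [← ContinuousLinearMap.isUnit_iff_bijective, ← spectrum.zero_notMem_iff ℂ, hM]
    exact fun h0 => h0.2 (mem_ball_self hR)
  · rwa [Zeroloid, hN]

theorem gzInvertible_iff {S : X →L[ℂ] X} :
    GzInvertible S ↔ 0 ∉ accSet (accSet (spectrum ℂ S)) :=
  ⟨GzInvertible.zero_notMem_accSet_accSet, gzInvertible_of_zero_notMem_accSet_accSet⟩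

lemma spectrum_sub_smul_one {𝕜 A : Type*} [CommRing 𝕜] [Ring A] [Algebra 𝕜 A] (T : A) (z : 𝕜) :
    spectrum 𝕜 (T - z • 1) = (· + z) ⁻¹' spectrum 𝕜 T := by
  ext w
  rw [mem_preimage, spectrum.add_mem_iff, Algebra.algebraMap_eq_smul_one, neg_add_eq_sub]

/-- The `g_z`-invertible spectrum of `T` equals `acc (acc σ(T))`. -/
theorem gz_spectrum_eq_acc_acc (T : X →L[ℂ] X) :
    {z : ℂ | ¬ GzInvertible (T - z • 1)} = accSet (accSet (spectrum ℂ T)) := by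
  have hshift (A : Set ℂ) (z : ℂ) : accSet ((· + z) ⁻¹' A) = (· + z) ⁻¹' accSet A :=
    derivedSet_preimage_of_isOpenEmbedding (Homeomorph.addRight z).isOpenEmbedding A
  ext z
  rw [mem_ofPred_eq, gzInvertible_iff, not_not, spectrum_sub_smul_one, hshift, hshift,
    mem_preimage, zero_add]
end

section
/- Let X be a complex Banach space and T a bounded linear operator on X. Then T is g_z-invertible if and only if there exists a bounded projection P on X (P² = P) commuting with T such that T + P is generalized Drazin invertible and TP is zeroloid. -/
open Filter Set Function

variable {X : Type*} [NormedAddCommGroup X] [NormedSpace ℂ X] [CompleteSpace X]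

/-- An operator is quasi-nilpotent if its spectrum is contained in `{0}`. -/
def QuasiNilpotent {Y : Type*} [NormedAddCommGroup Y] [NormedSpace ℂ Y]
    (S : Y →L[ℂ] Y) : Prop :=
  spectrum ℂ S ⊆ {0}

/-- `S` is generalized Drazin invertible. -/
def GenDrazinInvertible (S : X →L[ℂ] X) : Prop :=
  ∃ M N : Submodule ℂ X, Red S M N ∧ Function.Bijective (restrictCLM S M) ∧
    QuasiNilpotent (restrictCLM S N)

/-!
A decomposition in `Red T` is the same thing as an idempotent `Q` commuting with `T`, and the
spectra of the two restrictions can be read off in the operator algebra. By Koliha's theorem, which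
rests on the Riesz idempotent at `0`, `S` is generalized Drazin invertible iff `0` is not an
accumulation point of its spectrum.

If `T` is invertible on the range of `1 - Q` and zeroloid on the range of `Q`, then adding `Q`
shifts the second spectrum by `1`; as `-1` is not an accumulation point of it, `0` is not one for
`T + Q`. Conversely, given `P`, let `Q` be the spectral idempotent of `T + P` at `0`. It commutes
with `T` and `P`, and `T` and `T + P` agree on the range of `1 - P`. So `T` is invertible on the
range of `(1 - P) (1 - Q)`, quasi-nilpotent on that of `(1 - P) Q` and zeroloid on that of `P`, and
the last two add up to a zeroloid part.
-/

section ResolventMoment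

variable {A : Type*} [NormedRing A] [NormedAlgebra ℂ A] [CompleteSpace A]

/-- The `k`-th moment `(2 π i)⁻¹ ∮_{|z| = r} z ^ k (z - a)⁻¹ dz` of the resolvent of `a`, which is
the coefficient of `z ^ (-k - 1)` in the Laurent expansion of the resolvent about `0`. -/
noncomputable def resolventMoment (a : A) (r : ℝ) (k : ℤ) : A :=
  (2 * Real.pi * Complex.I : ℂ)⁻¹ • ∮ z in C(0, r), z ^ k • resolvent a z

/-- The Riesz idempotent `(2 π i)⁻¹ ∮_{|z| = r} (z - a)⁻¹ dz` of `a` associated with the part of the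
spectrum of `a` inside the circle of radius `r` about `0`. -/
noncomputable def rieszIdempotent (a : A) (r : ℝ) : A := resolventMoment a r 0

lemma clm_circleIntegral_comm {E F : Type*} [NormedAddCommGroup E] [NormedSpace ℂ E]
    [CompleteSpace E] [NormedAddCommGroup F] [NormedSpace ℂ F] [CompleteSpace F]
    (L : E →L[ℂ] F) {f : ℂ → E} {c : ℂ} {r : ℝ} (hf : CircleIntegrable f c r) :
    L (∮ z in C(c, r), f z) = ∮ z in C(c, r), L (f z) := by
  simp only [circleIntegral, ← L.intervalIntegral_comp_comm hf.out, map_smul]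

lemma mul_resolvent {𝕜 B : Type*} [CommRing 𝕜] [Ring B] [Algebra 𝕜 B] {b : B} {z : 𝕜}
    (hz : z ∈ resolventSet 𝕜 b) : b * resolvent b z = z • resolvent b z - 1 := by
  have hinv : (algebraMap 𝕜 B z - b) * resolvent b z = 1 := Ring.mul_inverse_cancel _ hz
  rw [← hinv, sub_mul, ← Algebra.smul_def, sub_sub_cancel]

lemma commute_resolvent_s2 {𝕜 B : Type*} [CommRing 𝕜] [Ring B] [Algebra 𝕜 B] {b x : B} {z : 𝕜}
    (hz : z ∈ resolventSet 𝕜 b) (hx : Commute x b) : Commute x (resolvent b z) := by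
  rw [spectrum.resolvent_eq hz]
  exact Commute.units_inv_right ((Algebra.commute_algebraMap_right z x).sub_right hx)

variable {a : A} {r : ℝ}

lemma differentiableAt_zpow_smul_resolvent {z : ℂ} (hz₀ : z ≠ 0) (hz : z ∈ resolventSet ℂ a)
    (k : ℤ) : DifferentiableAt ℂ (fun z ↦ z ^ k • resolvent a z) z :=
  (differentiableAt_zpow.2 (.inl hz₀)).smul
    (spectrum.hasDerivAt_resolvent_const_left hz).differentiableAt

section Circle

variable (hr : 0 < r) (ha : Metric.sphere (0 : ℂ) r ⊆ resolventSet ℂ a)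
include hr ha

lemma continuousOn_zpow_smul_resolvent (k : ℤ) :
    ContinuousOn (fun z ↦ z ^ k • resolvent a z) (Metric.sphere (0 : ℂ) r) := fun _ hz ↦
  (differentiableAt_zpow_smul_resolvent (Metric.ne_of_mem_sphere hz hr.ne') (ha hz)
    k).continuousAt.continuousWithinAt

lemma circleIntegrable_zpow_smul_resolvent (k : ℤ) :
    CircleIntegrable (fun z ↦ z ^ k • resolvent a z) 0 r :=
  (continuousOn_zpow_smul_resolvent hr ha k).circleIntegrable hr.le

lemma mul_resolventMoment (k : ℤ) :
    a * resolventMoment a r k = resolventMoment a r (k + 1) - if k = -1 then 1 else 0 := by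
  have hint := circleIntegrable_zpow_smul_resolvent hr ha
  have hone : (2 * Real.pi * Complex.I : ℂ)⁻¹ • ∮ z in C(0, r), z ^ k • (1 : A) =
      if k = -1 then 1 else 0 := by
    rw [circleIntegral.integral_smul_const]
    split_ifs with hk
    · have hcauchy := circleIntegral.integral_sub_center_inv 0 hr.ne'
      simp only [sub_zero] at hcauchy
      rw [hk]
      simp only [zpow_neg_one, hcauchy, smul_smul, inv_mul_cancel₀ Complex.two_pi_I_ne_zero,
        one_smul]
    · simpa using congrArg (fun w : ℂ ↦ (2 * Real.pi * Complex.I : ℂ)⁻¹ • w • (1 : A))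
        (circleIntegral.integral_sub_zpow_of_ne hk 0 0 r)
  have hpoint : EqOn (fun z : ℂ ↦ a * z ^ k • resolvent a z)
      (fun z ↦ z ^ (k + 1) • resolvent a z - z ^ k • (1 : A)) (Metric.sphere 0 r) := by
    intro z hz
    simp only [mul_smul_comm, mul_resolvent (ha hz), smul_sub, smul_smul,
      zpow_add_one₀ (Metric.ne_of_mem_sphere hz hr.ne')]
  have hone_int : CircleIntegrable (fun z : ℂ ↦ z ^ k • (1 : A)) 0 r :=
    ContinuousOn.circleIntegrable hr.le <| ContinuousOn.smul
      (fun z hz ↦ (continuousAt_zpow₀ z k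
        (.inl (Metric.ne_of_mem_sphere hz hr.ne'))).continuousWithinAt) continuousOn_const
  rw [← hone, resolventMoment, resolventMoment, mul_smul_comm, ← smul_sub,
    ← circleIntegral.integral_sub (hint (k + 1)) hone_int,
    ← circleIntegral.integral_congr hr.le hpoint]
  exact congrArg _ (clm_circleIntegral_comm (ContinuousLinearMap.mul ℂ A a) (hint k))

lemma commute_resolventMoment {x : A} (hx : Commute x a) (k : ℤ) :
    Commute x (resolventMoment a r k) := by
  have hint := circleIntegrable_zpow_smul_resolvent hr ha k
  refine Commute.smul_right ?_ _
  calc x * ∮ z in C(0, r), z ^ k • resolvent a z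
      = ∮ z in C(0, r), x * z ^ k • resolvent a z :=
        clm_circleIntegral_comm (ContinuousLinearMap.mul ℂ A x) hint
    _ = ∮ z in C(0, r), z ^ k • resolvent a z * x :=
        circleIntegral.integral_congr hr.le fun z hz ↦
          ((commute_resolvent_s2 (ha hz) hx).smul_right (z ^ k)).eq
    _ = (∮ z in C(0, r), z ^ k • resolvent a z) * x :=
        (clm_circleIntegral_comm ((ContinuousLinearMap.mul ℂ A).flip x) hint).symm

lemma exists_norm_resolventMoment_le :
    ∃ C : ℝ, ∀ k : ℤ, ‖resolventMoment a r k‖ ≤ C * r ^ k := by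
  obtain ⟨C, hC⟩ := (isCompact_sphere (0 : ℂ) r).exists_bound_of_continuousOn
    (continuousOn_zpow_smul_resolvent hr ha 0)
  refine ⟨r * C, fun k ↦ ?_⟩
  calc ‖resolventMoment a r k‖ ≤ r * (r ^ k * C) :=
        circleIntegral.norm_two_pi_i_inv_smul_integral_le_of_norm_le_const hr.le fun z hz ↦ by
          rw [norm_smul, norm_zpow, mem_sphere_zero_iff_norm.1 hz]
          gcongr
          simpa using hC z hz
    _ = r * C * r ^ k := by ring

lemma pow_mul_resolventMoment {k : ℤ} {n : ℕ} (hk : 0 ≤ k ∨ k + n ≤ -1) :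
    a ^ n * resolventMoment a r k = resolventMoment a r (k + n) := by
  induction n with
  | zero => simp
  | succ n ih =>
    push_cast at hk ⊢
    rw [pow_succ', mul_assoc, ih (by omega), mul_resolventMoment hr ha, if_neg (by omega), sub_zero,
      add_assoc]

lemma commute_rieszIdempotent {x : A} (hx : Commute x a) : Commute x (rieszIdempotent a r) :=
  commute_resolventMoment hr ha hx 0

lemma mul_resolventMoment_neg_one : a * resolventMoment a r (-1) = rieszIdempotent a r - 1 := by
  simpa [rieszIdempotent] using mul_resolventMoment hr ha (-1)

lemma rieszIdempotent_mul_resolventMoment_neg_one_eq (n : ℕ) :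
    rieszIdempotent a r * resolventMoment a r (-1) =
      resolventMoment a r n * resolventMoment a r (-1 - n) := by
  have hpos : a ^ n * rieszIdempotent a r = resolventMoment a r n := by
    simpa [rieszIdempotent] using pow_mul_resolventMoment hr ha (k := 0) (n := n) (.inl le_rfl)
  have hneg : a ^ n * resolventMoment a r (-1 - n) = resolventMoment a r (-1) := by
    simpa using pow_mul_resolventMoment hr ha (k := -1 - n) (n := n) (.inr (by omega))
  have hcomm : Commute (a ^ n) (rieszIdempotent a r) :=
    (commute_rieszIdempotent hr ha (Commute.refl a)).pow_left n
  rw [← hneg, ← mul_assoc, ← hcomm.eq, hpos]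

end Circle

lemma sphere_subset_resolventSet {B : Type*} [Ring B] [Algebra ℂ B] {b : B} {r₁ r₂ s : ℝ}
    (hb : ∀ z : ℂ, ‖z‖ ∈ Ioo r₁ r₂ → z ∈ resolventSet ℂ b) (hs : s ∈ Ioo r₁ r₂) :
    Metric.sphere (0 : ℂ) s ⊆ resolventSet ℂ b :=
  fun z hz ↦ hb z (mem_sphere_zero_iff_norm.1 hz ▸ hs)

lemma resolventMoment_eq_of_le {r s : ℝ} (hr : 0 < r) (hrs : r ≤ s)
    (ha : ∀ z : ℂ, ‖z‖ ∈ Icc r s → z ∈ resolventSet ℂ a) (k : ℤ) :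
    resolventMoment a s k = resolventMoment a r k := by
  have hdiff (z : ℂ) (hz : ‖z‖ ∈ Icc r s) :
      DifferentiableAt ℂ (fun z ↦ z ^ (k + 1) • resolvent a z) z :=
    differentiableAt_zpow_smul_resolvent (norm_pos_iff.1 (hr.trans_le hz.1)) (ha z hz) (k + 1)
  have hcancel {t : ℝ} (ht : 0 < t) :
      (∮ z in C(0, t), (z - 0)⁻¹ • z ^ (k + 1) • resolvent a z) =
        ∮ z in C(0, t), z ^ k • resolvent a z :=
    circleIntegral.integral_congr ht.le fun z hz ↦ by
      have hz₀ : z ≠ 0 := Metric.ne_of_mem_sphere hz ht.ne'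
      simp only [sub_zero, smul_smul, zpow_add_one₀ hz₀, mul_comm (z ^ k), inv_mul_cancel_left₀ hz₀]
  have hcauchy :=
    Complex.circleIntegral_sub_center_inv_smul_eq_of_differentiable_on_annulus_off_countable
      (c := 0) hr hrs (f := fun z ↦ z ^ (k + 1) • resolvent a z) countable_empty
      (fun z hz ↦ (hdiff z (by simpa [and_comm] using hz)).continuousAt.continuousWithinAt)
      (fun z hz ↦ hdiff z (Ioo_subset_Icc_self (by simpa [and_comm] using hz)))
  rw [hcancel (hr.trans_le hrs), hcancel hr] at hcauchy
  rw [resolventMoment, resolventMoment, hcauchy]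

end ResolventMoment

section CornerSpectrum

variable {𝕜 A : Type*} [CommRing 𝕜] [Ring A] [Algebra 𝕜 A]

/-- The spectrum of `a * q` in the corner ring `q * A * q`, for an idempotent `q` commuting with
`a`. It is expressed in `A` itself by completing `z - a` with the identity on the complementary
corner. -/
def cornerSpectrum (𝕜 : Type*) {A : Type*} [CommRing 𝕜] [Ring A] [Algebra 𝕜 A] (a q : A) : Set 𝕜 :=
  {z | ¬IsUnit ((algebraMap 𝕜 A z - a) * q + (1 - q))}

lemma cornerSpectrum_one (a : A) : cornerSpectrum 𝕜 a 1 = spectrum 𝕜 a := by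
  ext z
  simp [cornerSpectrum, spectrum.mem_iff]

lemma cornerSpectrum_congr {a b q : A} (h : a * q = b * q) :
    cornerSpectrum 𝕜 a q = cornerSpectrum 𝕜 b q := by
  simp only [cornerSpectrum, sub_mul, h]

lemma mem_cornerSpectrum_add_algebraMap {a q : A} {z w : 𝕜} :
    z ∈ cornerSpectrum 𝕜 (a + algebraMap 𝕜 A w) q ↔ z - w ∈ cornerSpectrum 𝕜 a q := by
  simp only [cornerSpectrum, mem_ofPred_eq, map_sub, sub_add_eq_sub_sub_swap]

lemma cornerSpectrum_add {a p q : A} (hap : Commute a p) (haq : Commute a q) (hpq : p * q = 0)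
    (hqp : q * p = 0) :
    cornerSpectrum 𝕜 a (p + q) = cornerSpectrum 𝕜 a p ∪ cornerSpectrum 𝕜 a q := by
  ext z
  set s := algebraMap 𝕜 A z - a
  have hsp : Commute s p := (Algebra.commute_algebraMap_left z p).sub_left hap
  have hsq : Commute s q := (Algebra.commute_algebraMap_left z q).sub_left haq
  have hpq_comm : Commute p q := hpq.trans hqp.symm
  have hfactor : s * (p + q) + (1 - (p + q)) = (s * p + (1 - p)) * (s * q + (1 - q)) := by
    have hpsq : p * (s * q) = 0 := by rw [← mul_assoc, ← hsp.eq, mul_assoc, hpq, mul_zero]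
    simp only [mul_add, add_mul, mul_sub, sub_mul, mul_one, one_mul, mul_assoc, hpsq, hpq, mul_zero]
    abel
  have hcomm : Commute (s * p + (1 - p)) (s * q + (1 - q)) := by
    have hs : Commute s (s * q + (1 - q)) :=
      ((Commute.refl s).mul_right hsq).add_right ((Commute.one_right s).sub_right hsq)
    have hp : Commute p (s * q + (1 - q)) :=
      (hsp.symm.mul_right hpq_comm).add_right ((Commute.one_right p).sub_right hpq_comm)
    exact (hs.mul_left hp).add_left ((Commute.one_left _).sub_left hp)
  simp only [cornerSpectrum, mem_union, mem_ofPred_eq]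
  rw [hfactor, hcomm.isUnit_mul_iff, not_and_or]

lemma spectrum_eq_union_cornerSpectrum {a q : A} (hq : IsIdempotentElem q) (haq : Commute a q) :
    spectrum 𝕜 a = cornerSpectrum 𝕜 a q ∪ cornerSpectrum 𝕜 a (1 - q) := by
  rw [← cornerSpectrum_add haq ((Commute.one_right a).sub_right haq) hq.mul_one_sub_self
    hq.one_sub_mul_self, add_sub_cancel, cornerSpectrum_one]

lemma cornerSpectrum_mono {a p q : A} (hp : IsIdempotentElem p) (hap : Commute a p)
    (haq : Commute a q) (hpq : p * q = p) (hqp : q * p = p) :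
    cornerSpectrum 𝕜 a p ⊆ cornerSpectrum 𝕜 a q := by
  have hsplit := cornerSpectrum_add (𝕜 := 𝕜) hap (haq.sub_right hap)
    (by rw [mul_sub, hpq, hp.eq, sub_self]) (by rw [sub_mul, hqp, hp.eq, sub_self])
  rw [add_sub_cancel] at hsplit
  exact hsplit ▸ subset_union_left

lemma cornerSpectrum_one_sub_mul_subset {a p q : A} (hp : IsIdempotentElem p)
    (hq : IsIdempotentElem q) (hap : Commute a p) (haq : Commute a q) (hpq : Commute p q) :
    cornerSpectrum 𝕜 a ((1 - p) * q) ⊆ cornerSpectrum 𝕜 (a + p) q := by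
  have hpq' : Commute (1 - p) q := (Commute.one_left q).sub_left hpq
  have hcongr : a * ((1 - p) * q) = (a + p) * ((1 - p) * q) := by
    rw [add_mul, ← mul_assoc p, hp.mul_one_sub_self, zero_mul, add_zero]
  have hcomm {e : A} (hae : Commute a e) (hpe : Commute p e) : Commute (a + p) e :=
    hae.add_left hpe
  rw [cornerSpectrum_congr hcongr]
  refine cornerSpectrum_mono (hp.one_sub.mul_of_commute hpq' hq) ?_ (hcomm haq hpq)
    (by rw [mul_assoc, hq.eq]) (by rw [hpq'.eq, ← mul_assoc, hq.eq])
  exact hcomm (((Commute.one_right a).sub_right hap).mul_right haq)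
    (((Commute.one_right p).sub_right (Commute.refl p)).mul_right hpq)

lemma cornerSpectrum_sup_subset {a p q : A} (hp : IsIdempotentElem p)
    (hq : IsIdempotentElem q) (hap : Commute a p) (haq : Commute a q) (hpq : Commute p q) :
    cornerSpectrum 𝕜 a (p + q - p * q) ⊆ cornerSpectrum 𝕜 a p ∪ cornerSpectrum 𝕜 (a + p) q := by
  have hsplit : p + q - p * q = p + (1 - p) * q := by noncomm_ring
  have hleft : p * ((1 - p) * q) = 0 := by rw [← mul_assoc, hp.mul_one_sub_self, zero_mul]
  have hright : (1 - p) * q * p = 0 := by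
    rw [mul_assoc, ← hpq.eq, ← mul_assoc, hp.one_sub_mul_self, zero_mul]
  rw [hsplit, cornerSpectrum_add hap (((Commute.one_right a).sub_right hap).mul_right haq) hleft
    hright]
  exact union_subset_union_right _ (cornerSpectrum_one_sub_mul_subset hp hq hap haq hpq)

lemma cornerSpectrum_one_sub_sup_subset {a p q : A} (hp : IsIdempotentElem p)
    (hq : IsIdempotentElem q) (hap : Commute a p) (haq : Commute a q) (hpq : Commute p q) :
    cornerSpectrum 𝕜 a (1 - (p + q - p * q)) ⊆ cornerSpectrum 𝕜 (a + p) (1 - q) := by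
  have hsplit : 1 - (p + q - p * q) = (1 - p) * (1 - q) := by noncomm_ring
  rw [hsplit]
  exact cornerSpectrum_one_sub_mul_subset hp hq.one_sub hap ((Commute.one_right a).sub_right haq)
    ((Commute.one_right p).sub_right hpq)

end CornerSpectrum

section CornerSpectrumField

variable {𝕜 A : Type*} [Field 𝕜] [Ring A] [Algebra 𝕜 A]

lemma cornerSpectrum_zero_subset {q : A} (hq : IsIdempotentElem q) :
    cornerSpectrum 𝕜 0 q ⊆ {0} := by
  refine fun z hz ↦ of_not_not fun hz₀ ↦ hz ?_
  have hmul {x y : 𝕜} (hxy : x * y = 1) : (x • q + (1 - q)) * (y • q + (1 - q)) = 1 := by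
    simp [mul_add, add_mul, smul_smul, mul_comm y, hxy, hq.eq, hq.mul_one_sub_self,
      hq.one_sub_mul_self, hq.one_sub.eq]
  rw [sub_zero, ← Algebra.smul_def]
  exact ⟨⟨_, _, hmul (mul_inv_cancel₀ hz₀), hmul (inv_mul_cancel₀ hz₀)⟩, rfl⟩

lemma spectrum_mul_sdiff_zero {a q : A} (hq : IsIdempotentElem q) (haq : Commute a q) :
    spectrum 𝕜 (a * q) \ {0} = cornerSpectrum 𝕜 a q \ {0} := by
  have hcorner : cornerSpectrum 𝕜 (a * q) q = cornerSpectrum 𝕜 a q :=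
    cornerSpectrum_congr (by rw [mul_assoc, hq.eq])
  have hcompl : cornerSpectrum 𝕜 (a * q) (1 - q) ⊆ {0} := by
    rw [cornerSpectrum_congr (b := 0) (by rw [mul_assoc, hq.mul_one_sub_self, mul_zero, zero_mul])]
    exact cornerSpectrum_zero_subset hq.one_sub
  rw [spectrum_eq_union_cornerSpectrum hq (haq.mul_left (Commute.refl q)), union_sdiff_distrib,
    hcorner, sdiff_eq_empty.2 hcompl, union_empty]

end CornerSpectrumField

section RieszIdempotent

variable {A : Type*} [NormedRing A] [CompleteSpace A]

lemma isClosed_cornerSpectrum {𝕜 : Type*} [NormedField 𝕜] [NormedAlgebra 𝕜 A] (a q : A) :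
    IsClosed (cornerSpectrum 𝕜 a q) := by
  have hcont : Continuous fun z : 𝕜 ↦ (algebraMap 𝕜 A z - a) * q + (1 - q) :=
    (((continuous_algebraMap 𝕜 A).sub continuous_const).mul continuous_const).add continuous_const
  exact (Units.isOpen.preimage hcont).isClosed_compl

lemma norm_le_of_mem_spectrum_of_norm_pow_le {𝕜 : Type*} [NormedField 𝕜] [NormedAlgebra 𝕜 A]
    {b : A} {C r : ℝ} (hr : 0 ≤ r) (hb : ∀ n : ℕ, ‖b ^ (n + 1)‖ ≤ C * r ^ (n + 1)) {z : 𝕜}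
    (hz : z ∈ spectrum 𝕜 b) : ‖z‖ ≤ r := by
  by_contra! hrz
  have hz₀ : 0 < ‖z‖ := hr.trans_lt hrz
  have hbound (n : ℕ) : 1 ≤ C * ‖(1 : A)‖ * (r / ‖z‖) ^ (n + 1) := by
    rw [div_pow, mul_div_assoc', one_le_div (by positivity)]
    calc ‖z‖ ^ (n + 1) = ‖z ^ (n + 1)‖ := (norm_pow _ _).symm
      _ ≤ ‖b ^ (n + 1)‖ * ‖(1 : A)‖ :=
        spectrum.norm_le_norm_mul_of_mem (spectrum.pow_mem_pow _ _ hz)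
      _ ≤ C * r ^ (n + 1) * ‖(1 : A)‖ := by gcongr; exact hb n
      _ = C * ‖(1 : A)‖ * r ^ (n + 1) := by ring
  have hlim : Tendsto (fun n : ℕ ↦ C * ‖(1 : A)‖ * (r / ‖z‖) ^ (n + 1)) atTop (nhds 0) := by
    simpa using ((tendsto_pow_atTop_nhds_zero_of_lt_one (by positivity)
      ((div_lt_one hz₀).2 hrz)).comp (tendsto_add_atTop_nat 1)).const_mul (C * ‖(1 : A)‖)
  exact zero_lt_one.not_ge (ge_of_tendsto' hlim hbound)

variable [NormedAlgebra ℂ A] {a : A} {r₁ r₂ s : ℝ}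

variable (hr₁ : 0 ≤ r₁) (ha : ∀ z : ℂ, ‖z‖ ∈ Ioo r₁ r₂ → z ∈ resolventSet ℂ a)
  (hs : s ∈ Ioo r₁ r₂)

include hr₁ ha hs

lemma resolventMoment_eq_of_mem_Ioo {r : ℝ} (hr : r ∈ Ioo r₁ r₂) (k : ℤ) :
    resolventMoment a s k = resolventMoment a r k := by
  rcases le_total r s with hrs | hsr
  · exact resolventMoment_eq_of_le (hr₁.trans_lt hr.1) hrs
      (fun z hz ↦ ha z ⟨hr.1.trans_le hz.1, hz.2.trans_lt hs.2⟩) k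
  · exact (resolventMoment_eq_of_le (hr₁.trans_lt hs.1) hsr
      (fun z hz ↦ ha z ⟨hs.1.trans_le hz.1, hz.2.trans_lt hr.2⟩) k).symm

lemma exists_norm_resolventMoment_le_of_annulus {r : ℝ} (hr : r ∈ Ioo r₁ r₂) :
    ∃ C : ℝ, ∀ k : ℤ, ‖resolventMoment a s k‖ ≤ C * r ^ k := by
  simpa only [resolventMoment_eq_of_mem_Ioo hr₁ ha hs hr] using
    exists_norm_resolventMoment_le (hr₁.trans_lt hr.1) (sphere_subset_resolventSet ha hr)

/- Moving `n` factors `a` across the product does not change it, while the factors are then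
controlled on circles of different radii, so that their norms multiply to `O((r / s) ^ n)`. -/
lemma rieszIdempotent_mul_resolventMoment_neg_one :
    rieszIdempotent a s * resolventMoment a s (-1) = 0 := by
  have hs₀ : 0 < s := hr₁.trans_lt hs.1
  have hsphere := sphere_subset_resolventSet ha hs
  obtain ⟨r, hr₁r, hrs⟩ := exists_between hs.1
  have hr₀ : 0 < r := hr₁.trans_lt hr₁r
  obtain ⟨C, hC⟩ := exists_norm_resolventMoment_le_of_annulus hr₁ ha hs ⟨hr₁r, hrs.trans hs.2⟩
  obtain ⟨D, hD⟩ := exists_norm_resolventMoment_le_of_annulus hr₁ ha hs hs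
  have hbound (n : ℕ) :
      ‖rieszIdempotent a s * resolventMoment a s (-1)‖ ≤ C * D * s⁻¹ * (r / s) ^ n := by
    rw [rieszIdempotent_mul_resolventMoment_neg_one_eq hs₀ hsphere n]
    calc ‖resolventMoment a s n * resolventMoment a s (-1 - n)‖
        ≤ ‖resolventMoment a s n‖ * ‖resolventMoment a s (-1 - n)‖ := norm_mul_le _ _
      _ ≤ (C * r ^ (n : ℤ)) * (D * s ^ (-1 - n : ℤ)) :=
        mul_le_mul (hC _) (hD _) (norm_nonneg _) ((norm_nonneg _).trans (hC _))
      _ = C * D * s⁻¹ * (r / s) ^ n := by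
        rw [zpow_sub₀ hs₀.ne', zpow_neg_one, zpow_natCast, zpow_natCast, div_pow]
        ring
  have hlim : Tendsto (fun n : ℕ ↦ C * D * s⁻¹ * (r / s) ^ n) atTop (nhds 0) := by
    simpa using (tendsto_pow_atTop_nhds_zero_of_lt_one (by positivity)
      ((div_lt_one hs₀).2 hrs)).const_mul (C * D * s⁻¹)
  exact norm_le_zero_iff.1 (ge_of_tendsto' hlim hbound)

lemma isIdempotentElem_rieszIdempotent : IsIdempotentElem (rieszIdempotent a s) := by
  have hs₀ : 0 < s := hr₁.trans_lt hs.1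
  have hsphere := sphere_subset_resolventSet ha hs
  have hcomm : Commute a (rieszIdempotent a s) :=
    commute_rieszIdempotent hs₀ hsphere (Commute.refl a)
  rw [isIdempotentElem_iff_mul_one_sub_self, ← neg_sub, ← mul_resolventMoment_neg_one hs₀ hsphere,
    mul_neg, ← mul_assoc, ← hcomm.eq, mul_assoc,
    rieszIdempotent_mul_resolventMoment_neg_one hr₁ ha hs, mul_zero, neg_zero]

lemma mul_rieszIdempotent_pow (n : ℕ) :
    (a * rieszIdempotent a s) ^ (n + 1) = resolventMoment a s (n + 1 : ℕ) := by
  have hs₀ : 0 < s := hr₁.trans_lt hs.1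
  have hsphere := sphere_subset_resolventSet ha hs
  have hcomm : Commute a (rieszIdempotent a s) :=
    commute_rieszIdempotent hs₀ hsphere (Commute.refl a)
  rw [hcomm.mul_pow, (isIdempotentElem_rieszIdempotent hr₁ ha hs).pow_succ_eq, rieszIdempotent,
    pow_mul_resolventMoment hs₀ hsphere (.inl le_rfl), zero_add]

lemma cornerSpectrum_rieszIdempotent_subset :
    cornerSpectrum ℂ a (rieszIdempotent a s) ⊆ Metric.closedBall 0 r₁ := by
  intro z hz
  rw [mem_closedBall_zero_iff]
  by_contra! hz₁
  obtain ⟨r, hr₁r, hr⟩ := exists_between (lt_min hz₁ (hs.1.trans hs.2))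
  obtain ⟨C, hC⟩ := exists_norm_resolventMoment_le_of_annulus hr₁ ha hs
    ⟨hr₁r, hr.trans_le (min_le_right _ _)⟩
  have hz_mem : z ∈ spectrum ℂ (a * rieszIdempotent a s) \ {0} := by
    rw [spectrum_mul_sdiff_zero (isIdempotentElem_rieszIdempotent hr₁ ha hs)
      (commute_rieszIdempotent (hr₁.trans_lt hs.1) (sphere_subset_resolventSet ha hs) (.refl a))]
    exact ⟨hz, norm_pos_iff.1 (hr₁.trans_lt hz₁)⟩
  have hzr : ‖z‖ ≤ r := norm_le_of_mem_spectrum_of_norm_pow_le (hr₁.trans hr₁r.le)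
    (fun n ↦ by simpa only [mul_rieszIdempotent_pow hr₁ ha hs, zpow_natCast] using hC (n + 1 : ℕ))
    hz_mem.1
  exact hzr.not_gt (hr.trans_le (min_le_left _ _))

lemma zero_notMem_cornerSpectrum_one_sub_rieszIdempotent :
    (0 : ℂ) ∉ cornerSpectrum ℂ a (1 - rieszIdempotent a s) := by
  have hs₀ : 0 < s := hr₁.trans_lt hs.1
  have hsphere := sphere_subset_resolventSet ha hs
  set q := rieszIdempotent a s
  set c := resolventMoment a s (-1)
  have hq : q * q = q := isIdempotentElem_rieszIdempotent hr₁ ha hs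
  have hqc : q * c = 0 := rieszIdempotent_mul_resolventMoment_neg_one hr₁ ha hs
  have hac : a * c = q - 1 := mul_resolventMoment_neg_one hs₀ hsphere
  have hac_comm : Commute a c := commute_resolventMoment hs₀ hsphere (Commute.refl a) _
  have haq_comm : Commute a q := commute_rieszIdempotent hs₀ hsphere (Commute.refl a)
  have hcq_comm : Commute c q := commute_rieszIdempotent hs₀ hsphere hac_comm.symm
  have hinv : (-a * (1 - q) + q) * (c + q) = 1 := by
    calc (-a * (1 - q) + q) * (c + q)
        = -(a * c) + a * (q * c) - a * q + a * (q * q) + q * c + q * q := by noncomm_ring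
      _ = 1 := by rw [hac, hqc, hq]; noncomm_ring
  have hcomm : Commute (-a * (1 - q) + q) (c + q) := by
    have ha' : Commute a (c + q) := hac_comm.add_right haq_comm
    have hq' : Commute q (c + q) := hcq_comm.symm.add_right (Commute.refl q)
    exact (ha'.neg_left.mul_left ((Commute.one_left _).sub_left hq')).add_left hq'
  have hunit : IsUnit (-a * (1 - q) + q) :=
    (hcomm.isUnit_mul_iff.1 (by rw [hinv]; exact isUnit_one)).1
  simpa [cornerSpectrum] using hunit

end RieszIdempotent

section IsolatedSpectrum

lemma derivedSet_subset_of_isClosed {Y : Type*} [TopologicalSpace Y] {s t : Set Y} (hst : s ⊆ t)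
    (ht : IsClosed t) : derivedSet s ⊆ t :=
  (derivedSet_mono _ _ hst).trans ((isClosed_iff_derivedSet_subset t).1 ht)

lemma derivedSet_sdiff_singleton_subset_iff {Y : Type*} [TopologicalSpace Y] [T1Space Y]
    {s : Set Y} {x : Y} : derivedSet (s \ {x}) ⊆ {x} ↔ derivedSet s ⊆ {x} := by
  refine ⟨fun h ↦ ?_, (derivedSet_mono _ _ sdiff_subset).trans⟩
  have hunion := derivedSet_union (s \ {x}) {x}
  rw [sdiff_union_self, derivedSet_union] at hunion
  exact subset_union_left.trans (hunion.subset.trans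
    (union_subset h (derivedSet_subset_of_isClosed subset_rfl isClosed_singleton)))

lemma sub_one_mem_derivedSet_cornerSpectrum {B : Type*} [Ring B] [Algebra ℂ B] {b q : B}
    (hq : IsIdempotentElem q) {z : ℂ}
    (hz : z ∈ derivedSet (cornerSpectrum ℂ (b + q) q)) :
    z - 1 ∈ derivedSet (cornerSpectrum ℂ b q) := by
  have hcongr : (b + q) * q = (b + algebraMap ℂ B 1) * q := by
    rw [map_one, add_mul, add_mul, hq.eq, one_mul]
  have hshift : (fun w ↦ w - 1) '' cornerSpectrum ℂ (b + q) q ⊆ cornerSpectrum ℂ b q := by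
    rw [cornerSpectrum_congr hcongr]
    exact image_subset_iff.2 fun w ↦ mem_cornerSpectrum_add_algebraMap.1
  exact derivedSet_mono _ _ hshift
    ((continuous_sub_right 1).image_derivedSet sub_left_injective (mem_image_of_mem _ hz))

variable {A : Type*} [NormedRing A] [NormedAlgebra ℂ A] [CompleteSpace A] {a p q : A}

lemma exists_spectralIdempotent (ha : (0 : ℂ) ∉ derivedSet (spectrum ℂ a)) :
    ∃ q : A, IsIdempotentElem q ∧ (∀ x, Commute x a → Commute x q) ∧
      (0 : ℂ) ∉ cornerSpectrum ℂ a (1 - q) ∧ cornerSpectrum ℂ a q ⊆ {0} := by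
  rw [mem_derivedSet, accPt_iff_frequently_nhdsNE, not_frequently] at ha
  obtain ⟨ε, hε, hball⟩ := Metric.mem_nhdsWithin_iff.1 ha
  have hannulus (z : ℂ) (hz : ‖z‖ ∈ Ioo 0 ε) : z ∈ resolventSet ℂ a :=
    of_not_not (hball ⟨mem_ball_zero_iff.2 hz.2, norm_pos_iff.1 hz.1⟩)
  have hhalf : ε / 2 ∈ Ioo 0 ε := ⟨half_pos hε, half_lt_self hε⟩
  exact ⟨rieszIdempotent a (ε / 2), isIdempotentElem_rieszIdempotent le_rfl hannulus hhalf,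
    fun _ ↦ commute_rieszIdempotent hhalf.1 (sphere_subset_resolventSet hannulus hhalf),
    zero_notMem_cornerSpectrum_one_sub_rieszIdempotent le_rfl hannulus hhalf,
    by simpa using cornerSpectrum_rieszIdempotent_subset le_rfl hannulus hhalf⟩

lemma zero_notMem_derivedSet_spectrum_of_cornerSpectrum (hq : IsIdempotentElem q)
    (haq : Commute a q) (hinv : (0 : ℂ) ∉ cornerSpectrum ℂ a (1 - q))
    (hacc : 0 ∉ derivedSet (cornerSpectrum ℂ a q)) : 0 ∉ derivedSet (spectrum ℂ a) := by
  rw [spectrum_eq_union_cornerSpectrum hq haq, derivedSet_union, mem_union, not_or]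
  exact ⟨hacc,
    fun h ↦ hinv (derivedSet_subset_of_isClosed subset_rfl (isClosed_cornerSpectrum _ _) h)⟩

lemma zero_notMem_derivedSet_spectrum_add_idempotent (hq : IsIdempotentElem q)
    (haq : Commute a q) (hinv : (0 : ℂ) ∉ cornerSpectrum ℂ a (1 - q))
    (hacc : -1 ∉ derivedSet (cornerSpectrum ℂ a q)) : 0 ∉ derivedSet (spectrum ℂ (a + q)) := by
  refine zero_notMem_derivedSet_spectrum_of_cornerSpectrum hq (haq.add_left (Commute.refl q)) ?_
    fun h ↦ hacc ?_
  · rwa [cornerSpectrum_congr (b := a) (by rw [add_mul, hq.mul_one_sub_self, add_zero])]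
  · simpa using sub_one_mem_derivedSet_cornerSpectrum hq h

/- The idempotent `e` is the join of `p` with the spectral idempotent `q` of `a + p` at `0`: on the
corner of `q - p * q` the elements `a` and `a + p` agree, so there `a` is quasi-nilpotent. -/
lemma exists_idempotent_of_zero_notMem_derivedSet_spectrum_add (hp : IsIdempotentElem p)
    (hap : Commute a p) (hiso : (0 : ℂ) ∉ derivedSet (spectrum ℂ (a + p)))
    (hacc : derivedSet (cornerSpectrum ℂ a p) ⊆ {0}) :
    ∃ e : A, IsIdempotentElem e ∧ Commute a e ∧ (0 : ℂ) ∉ cornerSpectrum ℂ a (1 - e) ∧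
      derivedSet (cornerSpectrum ℂ a e) ⊆ {0} := by
  obtain ⟨q, hq, hcomm, hinv, hqnil⟩ := exists_spectralIdempotent hiso
  have haq : Commute a q := hcomm a ((Commute.refl a).add_right hap)
  have hpq : Commute p q := hcomm p (hap.symm.add_right (Commute.refl p))
  refine ⟨p + q - p * q, .add_sub_mul_of_commute hpq hp hq,
    (hap.add_right haq).sub_right (hap.mul_right haq),
    fun h ↦ hinv (cornerSpectrum_one_sub_sup_subset hp hq hap haq hpq h), ?_⟩
  calc derivedSet (cornerSpectrum ℂ a (p + q - p * q))
      ⊆ derivedSet (cornerSpectrum ℂ a p ∪ cornerSpectrum ℂ (a + p) q) :=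
        derivedSet_mono _ _ (cornerSpectrum_sup_subset hp hq hap haq hpq)
    _ = derivedSet (cornerSpectrum ℂ a p) ∪ derivedSet (cornerSpectrum ℂ (a + p) q) :=
        derivedSet_union _ _
    _ ⊆ {0} := union_subset hacc (derivedSet_subset_of_isClosed hqnil isClosed_singleton)

end IsolatedSpectrum

section Operator

variable {Y : Type*} [NormedAddCommGroup Y] [NormedSpace ℂ Y] {T Q : Y →L[ℂ] Y}

lemma restrictCLM_apply {M : Submodule ℂ Y} (hM : ∀ x ∈ M, T x ∈ M) (x : M) :
    (restrictCLM T M x : Y) = T x := by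
  rw [restrictCLM, dif_pos hM]
  rfl

lemma apply_mem_range_of_commute_s2 (hTQ : Commute T Q) : ∀ x ∈ Q.range, T x ∈ Q.range := by
  rintro _ ⟨x, rfl⟩
  exact ⟨T x, (DFunLike.congr_fun hTQ.eq x).symm⟩

lemma ker_eq_range_one_sub (hQ : IsIdempotentElem Q) : Q.ker = (1 - Q).range :=
  LinearMap.IsIdempotentElem.ker_eq_range_one_sub
    (ContinuousLinearMap.IsIdempotentElem.toLinearMap hQ)

lemma isTopCompl_range_range_one_sub (hQ : IsIdempotentElem Q) :
    Submodule.IsTopCompl Q.range (1 - Q).range :=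
  ker_eq_range_one_sub hQ ▸ ContinuousLinearMap.IsIdempotentElem.isTopCompl hQ

lemma bijective_restrictCLM_range_iff (hQ : IsIdempotentElem Q) (hTQ : Commute T Q) :
    Bijective (restrictCLM T Q.range) ↔ Bijective ⇑(T * Q + (1 - Q)) := by
  let e := Submodule.prodEquivOfIsCompl Q.range Q.ker
    (ContinuousLinearMap.IsIdempotentElem.isTopCompl hQ).isCompl
  have hconj : ⇑(T * Q + (1 - Q)) ∘ e = e ∘ Prod.map (restrictCLM T Q.range) id := by
    ext ⟨⟨_, x, rfl⟩, y⟩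
    have hx : Q (Q x) = Q x := DFunLike.congr_fun hQ.eq x
    have hy : Q y = 0 := y.2
    simp [e, restrictCLM_apply (apply_mem_range_of_commute_s2 hTQ), hx, hy]
  rw [← e.bijective.of_comp_iff, hconj, e.bijective.of_comp_iff', Prod.map_bijective,
    and_iff_left bijective_id]

lemma algebraMap_sub_restrictCLM {M : Submodule ℂ Y} (hM : ∀ x ∈ M, T x ∈ M) (z : ℂ) :
    algebraMap ℂ (M →L[ℂ] M) z - restrictCLM T M =
      restrictCLM (algebraMap ℂ (Y →L[ℂ] Y) z - T) M := by
  ext x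
  have hM' : ∀ x ∈ M, (algebraMap ℂ (Y →L[ℂ] Y) z - T) x ∈ M := fun x hx ↦
    M.sub_mem (M.smul_mem z hx) (hM x hx)
  rw [restrictCLM_apply hM']
  simp [restrictCLM_apply hM, Algebra.algebraMap_eq_smul_one]

lemma zeroloid_mul_iff (hQ : IsIdempotentElem Q) (hTQ : Commute T Q) :
    Zeroloid (T * Q) ↔ derivedSet (cornerSpectrum ℂ T Q) ⊆ {0} := by
  rw [← derivedSet_sdiff_singleton_subset_iff, ← spectrum_mul_sdiff_zero hQ hTQ,
    derivedSet_sdiff_singleton_subset_iff]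
  rfl

variable [CompleteSpace Y]

lemma red_iff_exists_idempotent {M N : Submodule ℂ Y} :
    Red T M N ↔ ∃ Q : Y →L[ℂ] Y, IsIdempotentElem Q ∧ Commute T Q ∧
      (1 - Q).range = M ∧ Q.range = N := by
  constructor
  · rintro ⟨hM, hN, hTM, hTN, hMN⟩
    have hcompl := Submodule.IsCompl.isTopCompl_of_isClosed hMN.symm hN hM
    have hQ := Submodule.isIdempotentElem_projectionL hcompl
    have hrange := Submodule.range_projectionL hcompl
    have hker := Submodule.ker_projectionL hcompl
    refine ⟨N.projectionL M hcompl, hQ, ?_, ?_, hrange⟩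
    · exact ((ContinuousLinearMap.IsIdempotentElem.commute_iff hQ).2
        ⟨hrange.symm ▸ hTN, hker.symm ▸ hTM⟩).symm
    · rw [← ker_eq_range_one_sub hQ, hker]
  · rintro ⟨Q, hQ, hTQ, rfl, rfl⟩
    have hcompl := isTopCompl_range_range_one_sub hQ
    exact ⟨hcompl.isClosed', hcompl.isClosed,
      apply_mem_range_of_commute_s2 ((Commute.one_right T).sub_right hTQ),
      apply_mem_range_of_commute_s2 hTQ, hcompl.isCompl.symm⟩

lemma spectrum_restrictCLM_range (hQ : IsIdempotentElem Q) (hTQ : Commute T Q) :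
    spectrum ℂ (restrictCLM T Q.range) = cornerSpectrum ℂ T Q := by
  ext z
  have : CompleteSpace Q.range := (isTopCompl_range_range_one_sub hQ).isClosed.completeSpace_coe
  rw [spectrum.mem_iff, algebraMap_sub_restrictCLM (apply_mem_range_of_commute_s2 hTQ),
    ContinuousLinearMap.isUnit_iff_bijective, bijective_restrictCLM_range_iff hQ
      ((Algebra.commute_algebraMap_left z Q).sub_left hTQ),
    ← ContinuousLinearMap.isUnit_iff_bijective]
  rfl

lemma bijective_restrictCLM_range_iff_zero_notMem (hQ : IsIdempotentElem Q) (hTQ : Commute T Q) :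
    Bijective (restrictCLM T Q.range) ↔ 0 ∉ cornerSpectrum ℂ T Q := by
  have : CompleteSpace Q.range := (isTopCompl_range_range_one_sub hQ).isClosed.completeSpace_coe
  rw [← spectrum_restrictCLM_range hQ hTQ, spectrum.zero_notMem_iff,
    ContinuousLinearMap.isUnit_iff_bijective]

lemma exists_red_iff_exists_idempotent (P : Set ℂ → Prop) :
    (∃ M N : Submodule ℂ Y, Red T M N ∧ Bijective (restrictCLM T M) ∧
      P (spectrum ℂ (restrictCLM T N))) ↔
    ∃ Q : Y →L[ℂ] Y, IsIdempotentElem Q ∧ Commute T Q ∧ 0 ∉ cornerSpectrum ℂ T (1 - Q) ∧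
      P (cornerSpectrum ℂ T Q) := by
  have hiff {Q : Y →L[ℂ] Y} (hQ : IsIdempotentElem Q) (hTQ : Commute T Q) :
      Bijective (restrictCLM T (1 - Q).range) ↔ 0 ∉ cornerSpectrum ℂ T (1 - Q) :=
    bijective_restrictCLM_range_iff_zero_notMem hQ.one_sub ((Commute.one_right T).sub_right hTQ)
  simp only [red_iff_exists_idempotent]
  constructor
  · rintro ⟨_, _, ⟨Q, hQ, hTQ, rfl, rfl⟩, hbij, hP⟩
    exact ⟨Q, hQ, hTQ, (hiff hQ hTQ).1 hbij, spectrum_restrictCLM_range hQ hTQ ▸ hP⟩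
  · rintro ⟨Q, hQ, hTQ, hinv, hP⟩
    exact ⟨_, _, ⟨Q, hQ, hTQ, rfl, rfl⟩, (hiff hQ hTQ).2 hinv,
      (spectrum_restrictCLM_range hQ hTQ).symm ▸ hP⟩

lemma gzInvertible_iff_exists_idempotent :
    GzInvertible T ↔ ∃ Q : Y →L[ℂ] Y, IsIdempotentElem Q ∧ Commute T Q ∧
      0 ∉ cornerSpectrum ℂ T (1 - Q) ∧ derivedSet (cornerSpectrum ℂ T Q) ⊆ {0} :=
  exists_red_iff_exists_idempotent (derivedSet · ⊆ {0})

lemma genDrazinInvertible_iff_exists_idempotent :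
    GenDrazinInvertible T ↔ ∃ Q : Y →L[ℂ] Y, IsIdempotentElem Q ∧ Commute T Q ∧
      0 ∉ cornerSpectrum ℂ T (1 - Q) ∧ cornerSpectrum ℂ T Q ⊆ {0} :=
  exists_red_iff_exists_idempotent (· ⊆ {0})

lemma genDrazinInvertible_iff_zero_notMem_derivedSet :
    GenDrazinInvertible T ↔ 0 ∉ derivedSet (spectrum ℂ T) := by
  rw [genDrazinInvertible_iff_exists_idempotent]
  constructor
  · rintro ⟨Q, hQ, hTQ, hinv, hqnil⟩
    refine zero_notMem_derivedSet_spectrum_of_cornerSpectrum hQ hTQ hinv fun hacc ↦ ?_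
    obtain ⟨z, hz, hz₀⟩ := accPt_iff_nhds.1 hacc univ univ_mem
    exact hz₀ (hqnil hz.2)
  · intro hT
    obtain ⟨Q, hQ, hcomm, hinv, hqnil⟩ := exists_spectralIdempotent hT
    exact ⟨Q, hQ, hcomm T (Commute.refl T), hinv, hqnil⟩

end Operator

/-- `T` is `g_z`-invertible iff there is a bounded projection `P` commuting with `T` such that
`T + P` is generalized Drazin invertible and `TP` is zeroloid. -/
theorem gzInvertible_iff_exists_projection (T : X →L[ℂ] X) :
    GzInvertible T ↔ ∃ P : X →L[ℂ] X, P * P = P ∧ T * P = P * T ∧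
      GenDrazinInvertible (T + P) ∧ Zeroloid (T * P) := by
  rw [gzInvertible_iff_exists_idempotent]
  constructor
  · rintro ⟨Q, hQ, hTQ, hinv, hacc⟩
    have hneg_one : -1 ∉ derivedSet (cornerSpectrum ℂ T Q) := fun h ↦ by simpa using hacc h
    exact ⟨Q, hQ, hTQ,
      genDrazinInvertible_iff_zero_notMem_derivedSet.2
        (zero_notMem_derivedSet_spectrum_add_idempotent hQ hTQ hinv hneg_one),
      (zeroloid_mul_iff hQ hTQ).2 hacc⟩
  · rintro ⟨P, hP, hTP, hDrazin, hzero⟩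
    exact exists_idempotent_of_zero_notMem_derivedSet_spectrum_add hP hTP
      (genDrazinInvertible_iff_zero_notMem_derivedSet.1 hDrazin) ((zeroloid_mul_iff hP hTP).1 hzero)
end

section
/- Let X be a complex Banach space and T a bounded linear operator on X. Then T is g_z-invertible if and only if there exist a bounded projection P on X (P² = P) commuting with T and operators U, V ∈ L(X) such that P = TU = VT and T(I − P) is zeroloid. -/
open Filter Set Function

variable {X : Type*} [NormedAddCommGroup X] [NormedSpace ℂ X] [CompleteSpace X]

/-!
Closed complements `(M, N)` in a Banach space are the range and kernel of a bounded idempotent `P`,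
and `(M, N) ∈ Red(T)` exactly when `P` commutes with `T`. Write `ι : M → X` for the inclusion and
`π : X → M` for `P` with restricted codomain, so that `ι π = P`, `π ι = 1`, `ι T_M = T ι` and
`T_M π = π T`. If `B` inverts `T_M` then `U = V = ι B π` factors `P`; conversely `π U ι` and `π V ι`
are one-sided inverses of `T_M`. Moreover `T P = ι (T_M π)` while `(T_M π) ι = T_M`, so `T P` and
`T_M` have the same nonzero spectrum, hence the same accumulation points of the spectrum. Applied
to `1 - P`, whose range is `N`, this compares `T (1 - P)` with `T_N`.
-/

section TopologicalModule

variable {R E F : Type*} [Ring R] [TopologicalSpace E] [AddCommGroup E] [Module R E]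
  [TopologicalSpace F] [AddCommGroup F] [Module R F]

theorem isUnit_one_sub_comp_of_swap [IsTopologicalAddGroup E] [IsTopologicalAddGroup F]
    {A : F →L[R] E} {B : E →L[R] F} (h : IsUnit (1 - B ∘L A)) : IsUnit (1 - A ∘L B) := by
  obtain ⟨C, hBAC, hCBA⟩ := isUnit_iff_exists.1 h
  -- Formally `(1 - AB)⁻¹ = ∑ (AB)ⁿ = 1 + A (∑ (BA)ⁿ) B = 1 + A (1 - BA)⁻¹ B`.
  refine isUnit_iff_exists.2 ⟨1 + A ∘L C ∘L B, ?_, ?_⟩ <;> ext x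
  · have hx : C (B x) - B (A (C (B x))) = B x := congr($hBAC (B x))
    calc (x + A (C (B x))) - A (B (x + A (C (B x))))
        = x + A (C (B x) - B (A (C (B x)))) - A (B x) := by simp only [map_add, map_sub]; abel
      _ = x := by rw [hx, add_sub_cancel_right]
  · have hx : C (B x - B (A (B x))) = B x := congr($hCBA (B x))
    calc x - A (B x) + A (C (B (x - A (B x))))
        = x - A (B x) + A (C (B x - B (A (B x)))) := by rw [map_sub B]
      _ = x := by rw [hx, sub_add_cancel]

theorem isUnit_one_sub_comp_comm [IsTopologicalAddGroup E] [IsTopologicalAddGroup F]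
    {A : F →L[R] E} {B : E →L[R] F} : IsUnit (1 - A ∘L B) ↔ IsUnit (1 - B ∘L A) :=
  ⟨isUnit_one_sub_comp_of_swap, isUnit_one_sub_comp_of_swap⟩

theorem isUnit_iff_exists_factor_of_retract {ι : F →L[R] E} {π : E →L[R] F} {T : E →L[R] E}
    {A : F →L[R] F} (hπι : π ∘L ι = 1) (hιA : ι ∘L A = T ∘L ι) (hAπ : A ∘L π = π ∘L T) :
    IsUnit A ↔ ∃ U V : E →L[R] E, ι ∘L π = T * U ∧ ι ∘L π = V * T := by
  constructor
  · intro hA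
    obtain ⟨B, hAB, hBA⟩ := isUnit_iff_exists.1 hA
    refine ⟨ι ∘L B ∘L π, ι ∘L B ∘L π, ?_, ?_⟩
    · calc ι ∘L π = ι ∘L (A * B) ∘L π := by rw [hAB]; rfl
        _ = (ι ∘L A) ∘L B ∘L π := rfl
        _ = T * (ι ∘L B ∘L π) := by rw [hιA]; rfl
    · calc ι ∘L π = ι ∘L (B * A) ∘L π := by rw [hBA]; rfl
        _ = ι ∘L B ∘L A ∘L π := rfl
        _ = (ι ∘L B ∘L π) * T := by rw [hAπ]; rfl
  · rintro ⟨U, V, hU, hV⟩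
    have hcorner : π ∘L (ι ∘L π) ∘L ι = 1 := by
      calc π ∘L (ι ∘L π) ∘L ι = (π ∘L ι) ∘L (π ∘L ι) := rfl
        _ = 1 := by rw [hπι]; rfl
    refine isUnit_iff_exists_and_exists.2 ⟨⟨π ∘L U ∘L ι, ?_⟩, ⟨π ∘L V ∘L ι, ?_⟩⟩
    · calc A * (π ∘L U ∘L ι) = (A ∘L π) ∘L U ∘L ι := rfl
        _ = π ∘L (T * U) ∘L ι := by rw [hAπ]; rfl
        _ = 1 := by rw [← hU, hcorner]
    · calc (π ∘L V ∘L ι) * A = π ∘L V ∘L ι ∘L A := rfl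
        _ = π ∘L (V * T) ∘L ι := by rw [hιA]; rfl
        _ = 1 := by rw [← hV, hcorner]

theorem rangeRestrict_comp_subtypeL_of_isIdempotentElem {P : E →L[R] E}
    (hP : IsIdempotentElem P) : P.rangeRestrict ∘L P.range.subtypeL = 1 := by
  ext x
  exact (LinearMap.IsIdempotentElem.mem_range_iff
    (ContinuousLinearMap.IsIdempotentElem.toLinearMap hP)).1 x.2

end TopologicalModule

section Spectrum

variable {𝕜 E F : Type*} [Field 𝕜]
  [TopologicalSpace E] [AddCommGroup E] [IsTopologicalAddGroup E] [Module 𝕜 E]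
  [ContinuousConstSMul 𝕜 E]
  [TopologicalSpace F] [AddCommGroup F] [IsTopologicalAddGroup F] [Module 𝕜 F]
  [ContinuousConstSMul 𝕜 F]

theorem spectrum_comp_sdiff_zero_comm (A : F →L[𝕜] E) (B : E →L[𝕜] F) :
    spectrum 𝕜 (A ∘L B) \ {0} = spectrum 𝕜 (B ∘L A) \ {0} := by
  ext z
  refine and_congr_left fun hz ↦ not_congr ?_
  lift z to 𝕜ˣ using (show z ≠ 0 from hz).isUnit
  have hscaled := isUnit_one_sub_comp_comm (A := A) (B := z⁻¹ • B)
  rw [ContinuousLinearMap.comp_smul, ContinuousLinearMap.smul_comp] at hscaled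
  simpa only [spectrum.mem_resolventSet_iff, Algebra.algebraMap_eq_smul_one, ← Units.smul_def,
    IsUnit.smul_sub_iff_sub_inv_smul] using hscaled

theorem spectrum_sdiff_zero_eq_of_retract {ι : F →L[𝕜] E} {π : E →L[𝕜] F} {T : E →L[𝕜] E}
    {A : F →L[𝕜] F} (hπι : π ∘L ι = 1) (hιA : ι ∘L A = T ∘L ι) :
    spectrum 𝕜 (T * (ι ∘L π)) \ {0} = spectrum 𝕜 A \ {0} := by
  have hT : T * (ι ∘L π) = ι ∘L (A ∘L π) := congr($hιA.symm ∘L π)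
  have hA : (A ∘L π) ∘L ι = A := congr(A ∘L $hπι)
  rw [hT, spectrum_comp_sdiff_zero_comm, hA]

end Spectrum

theorem derivedSet_sdiff_of_finite {Y : Type*} [TopologicalSpace Y] [T1Space Y] (A : Set Y)
    {B : Set Y} (hB : B.Finite) : derivedSet (A \ B) = derivedSet A := by
  have hAB : derivedSet (A ∩ B) = ∅ :=
    eq_empty_of_forall_notMem fun _ hx ↦ Infinite.of_accPt hx (hB.inter_of_right A)
  calc derivedSet (A \ B) = derivedSet (A \ B) ∪ derivedSet (A ∩ B) := by rw [hAB, union_empty]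
    _ = derivedSet A := by rw [← derivedSet_union, sdiff_union_inter]

section Restriction

variable {E F : Type*} [NormedAddCommGroup E] [NormedSpace ℂ E]
  [NormedAddCommGroup F] [NormedSpace ℂ F] {T P : E →L[ℂ] E}

theorem zeroloid_iff_of_spectrum_sdiff_zero_eq {S : E →L[ℂ] E} {S' : F →L[ℂ] F}
    (h : spectrum ℂ S \ {0} = spectrum ℂ S' \ {0}) : Zeroloid S ↔ Zeroloid S' := by
  have hacc : accSet (spectrum ℂ S) = accSet (spectrum ℂ S') :=
    calc derivedSet (spectrum ℂ S)
        = derivedSet (spectrum ℂ S \ {0}) :=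
          (derivedSet_sdiff_of_finite _ (finite_singleton 0)).symm
      _ = derivedSet (spectrum ℂ S') := by
          rw [h, derivedSet_sdiff_of_finite _ (finite_singleton 0)]
  rw [Zeroloid, Zeroloid, hacc]

theorem subtypeL_comp_restrictCLM {M : Submodule ℂ E} (hM : ∀ x ∈ M, T x ∈ M) :
    M.subtypeL ∘L restrictCLM T M = T ∘L M.subtypeL := by
  rw [restrictCLM, dif_pos hM]
  rfl

theorem subtypeL_comp_restrictCLM_range (hTP : Commute T P) :
    P.range.subtypeL ∘L restrictCLM T P.range = T ∘L P.range.subtypeL := by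
  refine subtypeL_comp_restrictCLM ?_
  rintro _ ⟨x, rfl⟩
  exact ⟨T x, congr($hTP.eq.symm x)⟩

theorem restrictCLM_range_comp_rangeRestrict (hTP : Commute T P) :
    restrictCLM T P.range ∘L P.rangeRestrict = P.rangeRestrict ∘L T := by
  ext x
  calc P.range.subtypeL (restrictCLM T P.range (P.rangeRestrict x))
      = T (P x) := congr($(subtypeL_comp_restrictCLM_range hTP) (P.rangeRestrict x))
    _ = P (T x) := congr($hTP.eq x)

theorem zeroloid_mul_iff_zeroloid_restrictCLM_range (hP : IsIdempotentElem P)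
    (hTP : Commute T P) : Zeroloid (T * P) ↔ Zeroloid (restrictCLM T P.range) := by
  have hspec := spectrum_sdiff_zero_eq_of_retract
    (rangeRestrict_comp_subtypeL_of_isIdempotentElem hP) (subtypeL_comp_restrictCLM_range hTP)
  rw [ContinuousLinearMap.subtypeL_comp_codRestrict] at hspec
  exact zeroloid_iff_of_spectrum_sdiff_zero_eq hspec

theorem bijective_restrictCLM_range_iff_exists_factor [CompleteSpace E] (hP : IsIdempotentElem P)
    (hTP : Commute T P) :
    Bijective (restrictCLM T P.range) ↔ ∃ U V : E →L[ℂ] E, P = T * U ∧ P = V * T := by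
  have : CompleteSpace P.range :=
    (ContinuousLinearMap.IsIdempotentElem.isClosed_range hP).completeSpace_coe
  rw [← ContinuousLinearMap.isUnit_iff_bijective]
  exact isUnit_iff_exists_factor_of_retract (rangeRestrict_comp_subtypeL_of_isIdempotentElem hP)
    (subtypeL_comp_restrictCLM_range hTP) (restrictCLM_range_comp_rangeRestrict hTP)

theorem red_iff_exists_isIdempotentElem [CompleteSpace E] {M N : Submodule ℂ E} :
    Red T M N ↔ ∃ P : E →L[ℂ] E, IsIdempotentElem P ∧ Commute T P ∧
      P.range = M ∧ (1 - P).range = N := by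
  constructor
  · rintro ⟨hM, hN, hTM, hTN, hMN⟩
    have h : M.IsTopCompl N := Submodule.isTopCompl_iff_isCompl_isClosed.2 ⟨hMN, hM, hN⟩
    have hP : IsIdempotentElem (M.projectionL N h) := Submodule.isIdempotentElem_projectionL h
    refine ⟨M.projectionL N h, hP, Commute.symm ?_, Submodule.range_projectionL h, ?_⟩
    · rw [ContinuousLinearMap.IsIdempotentElem.commute_iff hP, Submodule.range_projectionL,
        Submodule.ker_projectionL]
      exact ⟨hTM, hTN⟩
    · rw [ContinuousLinearMap.one_def, ← Submodule.projectionL_eq_id_sub_projectionL,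
        Submodule.range_projectionL]
  · rintro ⟨P, hP, hTP, rfl, rfl⟩
    have hker : P.ker = (1 - P).range := LinearMap.IsIdempotentElem.ker_eq_range_one_sub
      (ContinuousLinearMap.IsIdempotentElem.toLinearMap hP)
    obtain ⟨hTrange, hTker⟩ := (ContinuousLinearMap.IsIdempotentElem.commute_iff hP).1 hTP.symm
    rw [← hker]
    exact ⟨ContinuousLinearMap.IsIdempotentElem.isClosed_range hP, P.isClosed_ker, hTrange, hTker,
      (ContinuousLinearMap.IsIdempotentElem.isTopCompl hP).isCompl⟩

theorem gzInvertible_iff_exists_isIdempotentElem [CompleteSpace E] :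
    GzInvertible T ↔ ∃ P : E →L[ℂ] E, IsIdempotentElem P ∧ Commute T P ∧
      Bijective (restrictCLM T P.range) ∧ Zeroloid (restrictCLM T (1 - P).range) := by
  simp only [GzInvertible, red_iff_exists_isIdempotentElem]
  constructor
  · rintro ⟨_, _, ⟨P, hP, hTP, rfl, rfl⟩, hbij, hzero⟩
    exact ⟨P, hP, hTP, hbij, hzero⟩
  · rintro ⟨P, hP, hTP, hbij, hzero⟩
    exact ⟨_, _, ⟨P, hP, hTP, rfl, rfl⟩, hbij, hzero⟩

theorem zeroloid_mul_one_sub_iff (hP : IsIdempotentElem P) (hTP : Commute T P) :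
    Zeroloid (T * (1 - P)) ↔ Zeroloid (restrictCLM T (1 - P).range) :=
  zeroloid_mul_iff_zeroloid_restrictCLM_range hP.one_sub ((Commute.one_right T).sub_right hTP)

end Restriction

/-- `T` is `g_z`-invertible iff there are a bounded projection `P` commuting with `T` and
operators `U, V` with `P = TU = VT` and `T(I - P)` zeroloid. -/
theorem gzInvertible_iff_exists_projection_factor (T : X →L[ℂ] X) :
    GzInvertible T ↔ ∃ P U V : X →L[ℂ] X, P * P = P ∧ T * P = P * T ∧
      P = T * U ∧ P = V * T ∧ Zeroloid (T * (1 - P)) := by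
  rw [gzInvertible_iff_exists_isIdempotentElem]
  constructor
  · rintro ⟨P, hP, hTP, hbij, hzero⟩
    obtain ⟨U, V, hU, hV⟩ := (bijective_restrictCLM_range_iff_exists_factor hP hTP).1 hbij
    exact ⟨P, U, V, hP, hTP, hU, hV, (zeroloid_mul_one_sub_iff hP hTP).2 hzero⟩
  · rintro ⟨P, U, V, hP, hTP, hU, hV, hzero⟩
    exact ⟨P, hP, hTP, (bijective_restrictCLM_range_iff_exists_factor hP hTP).2 ⟨U, V, hU, hV⟩,
      (zeroloid_mul_one_sub_iff hP hTP).1 hzero⟩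
end
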